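/- Let 0 < α ≤ 1, let h > 0, let N ≥ 2 be an integer, let x_j = a + jh (j = 0,…,N), and let p, q, r be real-valued mesh functions with p(x_i) > 0 and r(x_i) > 0 for all i. Suppose y is nontrivial, satisfies y(x_0) = y(x_N) = 0, and minimizes the Rayleigh quotient R[y] = J[y]/I[y] over all nontrivial mesh functions vanishing at x_0 and x_N. Then R[y] equals the smallest eigenvalue λ_1 of the discrete fractional Sturm–Liouville problem ₖΔ^α_N(p(x_k)·₀Δ^α_k y(x_k)) + q(x_k) y(x_k) = λ r(x_k) y(x_k), k = 1,…,N−1, with y(x_0) = y(x_N) = 0. -/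

import Mathlib

/-!
The Euler–Lagrange argument. Discrete fractional summation by parts (`sum_mul_glBackDiff`) turns
the first variation of `J - μ I` at `y` in a direction `z` vanishing at `x_0` into the weighted sum
of the residuals of the Sturm–Liouville equation against `z`.

* Testing an eigenpair `(μ, w)` against `w` itself gives `J[w] = μ I[w]`, so every eigenvalue is a
  value of the Rayleigh quotient, and the minimum of the quotient is at most `λ_1`
  (`slJ_eq_of_isSLEigenpair`).
* If `y` is a minimizer with value `μ`, then `J - μ I` is nonnegative on all admissible functions
  and vanishes at `y`, so its first variation at `y` vanishes in every admissible direction.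
  Taking the unit mesh functions as directions shows that `(μ, y)` is an eigenpair, hence
  `λ_1 ≤ μ`.
-/

/-- The Grünwald–Letnikov coefficients `a_i^{(α)} = (-1)^i α(α-1)⋯(α-i+1)/i!`
(with `a_0^{(α)} = 1`). -/
noncomputable def acoef (α : ℝ) (i : ℕ) : ℝ :=
  (-1 : ℝ) ^ i * (∏ j ∈ Finset.range i, (α - (j : ℝ))) / (Nat.factorial i)

/-- The backward fractional difference of order `α` on a uniform mesh with step `h`,
of a mesh function `f` (where `f k` stands for `f(x_k)`, `x_k = a + k h`):
`₀Δ^α_k f(x_k) = h^{-α} Σ_{i=0}^{k} a_i^{(α)} f(x_{k-i})`. -/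
noncomputable def glBackDiff (α h : ℝ) (f : ℕ → ℝ) (k : ℕ) : ℝ :=
  h ^ (-α) * ∑ i ∈ Finset.range (k + 1), acoef α i * f (k - i)

/-- The forward fractional difference of order `α` on a uniform mesh with step `h`
and `N + 1` mesh points: `ₖΔ^α_N f(x_k) = h^{-α} Σ_{i=0}^{N-k} a_i^{(α)} f(x_{k+i})`. -/
noncomputable def glFwdDiff (α h : ℝ) (N : ℕ) (f : ℕ → ℝ) (k : ℕ) : ℝ :=
  h ^ (-α) * ∑ i ∈ Finset.range (N - k + 1), acoef α i * f (k + i)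

/-- `y` satisfies the discrete fractional Sturm–Liouville equation
`ₖΔ^α_N (p(x_k) ₀Δ^α_k y(x_k)) + q(x_k) y(x_k) = λ r(x_k) y(x_k)` for `k = 1, …, N-1`. -/
def SLSolves (α h : ℝ) (N : ℕ) (p q r : ℕ → ℝ) (lam : ℝ) (y : ℕ → ℝ) : Prop :=
  ∀ k, 1 ≤ k → k ≤ N - 1 →
    glFwdDiff α h N (fun j => p j * glBackDiff α h y j) k + q k * y k = lam * (r k * y k)

/-- `(lam, y)` is an eigenpair of the discrete fractional Sturm–Liouville problem:
`y` is a nontrivial mesh function satisfying the equation together with the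
boundary conditions `y(x_0) = y(x_N) = 0`. -/
def IsSLEigenpair (α h : ℝ) (N : ℕ) (p q r : ℕ → ℝ) (lam : ℝ) (y : ℕ → ℝ) : Prop :=
  y 0 = 0 ∧ y N = 0 ∧ (∃ k ≤ N, y k ≠ 0) ∧ SLSolves α h N p q r lam y

/-- The functional `J[y] = Σ_{k=1}^{N} [p(x_k) (₀Δ^α_k y(x_k))² + q(x_k) y(x_k)²]`. -/
noncomputable def slJ (α h : ℝ) (N : ℕ) (p q : ℕ → ℝ) (y : ℕ → ℝ) : ℝ :=
  ∑ k ∈ Finset.Icc 1 N, (p k * (glBackDiff α h y k) ^ 2 + q k * (y k) ^ 2)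

/-- The functional `I[y] = Σ_{k=1}^{N} r(x_k) y(x_k)²`. -/
noncomputable def slI (N : ℕ) (r : ℕ → ℝ) (y : ℕ → ℝ) : ℝ :=
  ∑ k ∈ Finset.Icc 1 N, r k * (y k) ^ 2

lemma glBackDiff_eq_sum_Icc (α h : ℝ) (z : ℕ → ℝ) (hz : z 0 = 0) (k : ℕ) :
    glBackDiff α h z k = h ^ (-α) * ∑ j ∈ Finset.Icc 1 k, acoef α (k - j) * z j := by
  unfold glBackDiff
  congr 1
  rw [← Finset.sum_range_reflect, Finset.sum_range_succ']
  have e : Finset.Icc 1 k = Finset.Ico 1 (k + 1) := by ext; simp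
  rw [e, Finset.sum_Ico_eq_sum_range]
  have h0 : k - (k + 1 - 1 - 0) = 0 := by omega
  rw [h0, hz, mul_zero, add_zero]
  refine Finset.sum_congr (by simp) fun i hi => ?_
  have hi' : i < k := by simpa using hi
  congr 2 <;> omega

lemma glFwdDiff_eq_sum_Icc (α h : ℝ) (N : ℕ) (g : ℕ → ℝ) {k : ℕ} (hk : k ≤ N) :
    glFwdDiff α h N g k = h ^ (-α) * ∑ j ∈ Finset.Icc k N, acoef α (j - k) * g j := by
  unfold glFwdDiff
  congr 1
  have e : Finset.Icc k N = Finset.Ico k (N + 1) := by ext; simp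
  rw [e, Finset.sum_Ico_eq_sum_range]
  refine Finset.sum_congr (by congr 1; omega) fun i hi => ?_
  congr 2; omega

/-- Discrete fractional summation by parts: the forward difference is the adjoint of the backward
difference on mesh functions vanishing at `x_0`. -/
lemma sum_mul_glBackDiff (α h : ℝ) (N : ℕ) (g z : ℕ → ℝ) (hz : z 0 = 0) :
    ∑ k ∈ Finset.Icc 1 N, g k * glBackDiff α h z k
      = ∑ k ∈ Finset.Icc 1 N, glFwdDiff α h N g k * z k := by
  have e1 : ∀ k ∈ Finset.Icc 1 N, g k * glBackDiff α h z k
      = ∑ j ∈ Finset.Icc 1 k, h ^ (-α) * acoef α (k - j) * g k * z j := by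
    intro k _
    rw [glBackDiff_eq_sum_Icc α h z hz, Finset.mul_sum, Finset.mul_sum]
    exact Finset.sum_congr rfl fun j _ => by ring
  have e2 : ∀ j ∈ Finset.Icc 1 N, glFwdDiff α h N g j * z j
      = ∑ k ∈ Finset.Icc j N, h ^ (-α) * acoef α (k - j) * g k * z j := by
    intro j hj
    rw [glFwdDiff_eq_sum_Icc α h N g (Finset.mem_Icc.1 hj).2, Finset.mul_sum, Finset.sum_mul]
    exact Finset.sum_congr rfl fun j _ => by ring
  rw [Finset.sum_congr rfl e1, Finset.sum_congr rfl e2]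
  refine Finset.sum_comm' fun k j => ?_
  simp only [Finset.mem_Icc]
  omega

lemma slI_pos {N : ℕ} {r z : ℕ → ℝ} (hr : ∀ i ≤ N, 0 < r i) (hz0 : z 0 = 0)
    (hz : ∃ k ≤ N, z k ≠ 0) : 0 < slI N r z := by
  obtain ⟨k, hk, hzk⟩ := hz
  have hk0 : k ≠ 0 := fun h => hzk (h ▸ hz0)
  refine Finset.sum_pos' (fun i hi => ?_) ⟨k, Finset.mem_Icc.2 ⟨by omega, hk⟩, ?_⟩
  · exact mul_nonneg (hr i (Finset.mem_Icc.1 hi).2).le (sq_nonneg _)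
  · have := hr k hk
    positivity

lemma glBackDiff_add_smul (α h t : ℝ) (y z : ℕ → ℝ) (k : ℕ) :
    glBackDiff α h (fun j => y j + t * z j) k
      = glBackDiff α h y k + t * glBackDiff α h z k := by
  unfold glBackDiff
  rw [mul_left_comm, ← mul_add]
  congr 1
  rw [Finset.mul_sum, ← Finset.sum_add_distrib]
  exact Finset.sum_congr rfl fun j _ => by ring

lemma slI_add_smul (N : ℕ) (r y z : ℕ → ℝ) (t : ℝ) :
    slI N r (fun j => y j + t * z j)
      = slI N r y + 2 * t * (∑ k ∈ Finset.Icc 1 N, r k * y k * z k) + t ^ 2 * slI N r z := by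
  unfold slI
  simp only [Finset.mul_sum, ← Finset.sum_add_distrib]
  exact Finset.sum_congr rfl fun k _ => by ring

/-- Expansion of `J` along a line; the first variation is written through the Sturm–Liouville
operator by summation by parts. -/
lemma slJ_add_smul (α h : ℝ) (N : ℕ) (p q y z : ℕ → ℝ) (hz : z 0 = 0) (t : ℝ) :
    slJ α h N p q (fun j => y j + t * z j)
      = slJ α h N p q y
        + 2 * t * (∑ k ∈ Finset.Icc 1 N,
          (glFwdDiff α h N (fun j => p j * glBackDiff α h y j) k + q k * y k) * z k)
        + t ^ 2 * slJ α h N p q z := by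
  simp only [add_mul, Finset.sum_add_distrib]
  rw [← sum_mul_glBackDiff α h N (fun j => p j * glBackDiff α h y j) z hz]
  unfold slJ
  simp only [glBackDiff_add_smul, Finset.mul_sum, ← Finset.sum_add_distrib]
  exact Finset.sum_congr rfl fun k _ => by ring

/-- Testing the equation of an eigenpair against the eigenfunction itself. -/
lemma slJ_eq_of_isSLEigenpair {α h : ℝ} {N : ℕ} {p q r w : ℕ → ℝ} {μ : ℝ}
    (hw : IsSLEigenpair α h N p q r μ w) : slJ α h N p q w = μ * slI N r w := by
  obtain ⟨hw0, hwN, -, hsol⟩ := hw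
  have e : slJ α h N p q w = ∑ k ∈ Finset.Icc 1 N,
      (glFwdDiff α h N (fun j => p j * glBackDiff α h w j) k + q k * w k) * w k := by
    simp only [add_mul, Finset.sum_add_distrib]
    rw [← sum_mul_glBackDiff α h N (fun j => p j * glBackDiff α h w j) w hw0]
    unfold slJ
    rw [← Finset.sum_add_distrib]
    exact Finset.sum_congr rfl fun k _ => by ring
  rw [e, slI, Finset.mul_sum]
  refine Finset.sum_congr rfl fun k hk => ?_
  rw [Finset.mem_Icc] at hk
  -- The equation is not imposed at `k = N`, where the boundary condition takes over.
  rcases eq_or_ne k N with rfl | hkN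
  · simp [hwN]
  · rw [hsol k hk.1 (by omega)]
    ring

lemma slJ_eq_zero {α h : ℝ} {N : ℕ} {p q z : ℕ → ℝ} (hz : ∀ k ≤ N, z k = 0) :
    slJ α h N p q z = 0 := by
  refine Finset.sum_eq_zero fun k hk => ?_
  rw [Finset.mem_Icc] at hk
  have hB : glBackDiff α h z k = 0 := by
    unfold glBackDiff
    rw [Finset.sum_eq_zero fun i _ => by rw [hz (k - i) (by omega), mul_zero], mul_zero]
  rw [hB, hz k hk.2]
  ring

lemma slI_eq_zero {N : ℕ} {r z : ℕ → ℝ} (hz : ∀ k ≤ N, z k = 0) : slI N r z = 0 :=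
  Finset.sum_eq_zero fun k hk => by rw [hz k (Finset.mem_Icc.1 hk).2]; ring

/-- The Euler–Lagrange equation: if `J - μ I` is nonnegative on the mesh functions vanishing at
both ends and is zero at `y`, then `y` solves the Sturm–Liouville equation with `λ = μ`. -/
lemma slSolves_of_nonneg {α h : ℝ} {N : ℕ} {p q r y : ℕ → ℝ} {μ : ℝ}
    (hy0 : y 0 = 0) (hyN : y N = 0) (hy : slJ α h N p q y = μ * slI N r y)
    (hnn : ∀ z : ℕ → ℝ, z 0 = 0 → z N = 0 → μ * slI N r z ≤ slJ α h N p q z) :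
    SLSolves α h N p q r μ y := by
  intro m hm1 hmN
  set z : ℕ → ℝ := Pi.single m 1 with hzdef
  have hz0 : z 0 = 0 := Pi.single_eq_of_ne (by omega) _
  have hzN : z N = 0 := Pi.single_eq_of_ne (by omega) _
  have hsum : ∀ f : ℕ → ℝ, ∑ k ∈ Finset.Icc 1 N, f k * z k = f m := by
    intro f
    rw [Finset.sum_eq_single_of_mem m (Finset.mem_Icc.2 ⟨hm1, by omega⟩)
      fun k _ hk => by rw [hzdef, Pi.single_eq_of_ne hk, mul_zero]]
    simp [hzdef]
  set L := glFwdDiff α h N (fun j => p j * glBackDiff α h y j) m + q m * y m with hL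
  -- A quadratic in `t` that is nonnegative everywhere and has no constant term has no linear term.
  have key := discrim_le_zero (a := slJ α h N p q z - μ * slI N r z)
    (b := 2 * (L - μ * (r m * y m))) (c := 0) fun t => by
      have ht := hnn (fun j => y j + t * z j) (by simp [hy0, hz0]) (by simp [hyN, hzN])
      rw [slI_add_smul, slJ_add_smul α h N p q y z hz0, hsum (fun k => r k * y k),
        hsum (fun k => glFwdDiff α h N (fun j => p j * glBackDiff α h y j) k + q k * y k)] at ht
      simp only [← hL] at ht
      linarith
  have hsq : (L - μ * (r m * y m)) ^ 2 ≤ 0 := by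
    unfold discrim at key
    linarith
  have := pow_eq_zero_iff (two_ne_zero) |>.1 (le_antisymm hsq (sq_nonneg _))
  linarith

/-- if a nontrivial mesh function `y` with `y(x_0) = y(x_N) = 0`
minimizes the Rayleigh quotient `R[y] = J[y]/I[y]` over all nontrivial mesh
functions vanishing at `x_0` and `x_N`, then `R[y]` equals the smallest
eigenvalue `λ_1` of the discrete fractional Sturm–Liouville problem. -/
theorem discrete_SL_rayleigh_min (a : ℝ) (α h : ℝ)
    (hα0 : 0 < α) (hα1 : α ≤ 1) (hh : 0 < h) (N : ℕ) (hN : 2 ≤ N) (p q r : ℕ → ℝ)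
    (hp : ∀ i ≤ N, 0 < p i) (hr : ∀ i ≤ N, 0 < r i)
    (y : ℕ → ℝ) (hy0 : y 0 = 0) (hyN : y N = 0) (hynz : ∃ k ≤ N, y k ≠ 0)
    (hmin : ∀ z : ℕ → ℝ, z 0 = 0 → z N = 0 → (∃ k ≤ N, z k ≠ 0) →
      slJ α h N p q y / slI N r y ≤ slJ α h N p q z / slI N r z)
    (lam1 : ℝ)
    (h1 : ∃ w, IsSLEigenpair α h N p q r lam1 w)
    (hsmallest : ∀ μ, (∃ w, IsSLEigenpair α h N p q r μ w) → lam1 ≤ μ) :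
    slJ α h N p q y / slI N r y = lam1 := by
  have hIy := slI_pos hr hy0 hynz
  set R := slJ α h N p q y / slI N r y with hR
  have hJy : slJ α h N p q y = R * slI N r y := by rw [hR]; field_simp
  apply le_antisymm
  · obtain ⟨w, hw⟩ := h1
    have hIw := slI_pos hr hw.1 hw.2.2.1
    have hle := hmin w hw.1 hw.2.1 hw.2.2.1
    rwa [slJ_eq_of_isSLEigenpair hw, mul_div_cancel_right₀ _ hIw.ne'] at hle
  · refine hsmallest R ⟨y, hy0, hyN, hynz, slSolves_of_nonneg hy0 hyN hJy fun z hz0 hzN => ?_⟩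
    by_cases hz : ∃ k ≤ N, z k ≠ 0
    · exact (le_div_iff₀ (slI_pos hr hz0 hz)).1 (hmin z hz0 hzN hz)
    · push Not at hz
      rw [slI_eq_zero hz, slJ_eq_zero hz, mul_zero]
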